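/- Let A = F ⊕ A_1 ⊕ A_2 ⊕ ··· be a graded algebra generated in degree 1, let d > 3, and suppose that in the A∞-structure on E(A) induced from the bar/cobar construction T(J*) the only nontrivial multiplications are m_2 and m_{d−1}, and that (E(A), m_2, m_{d−1}) is a reduced (2, d−1)-algebra generated by E^1(A). Then A is a piecewise-Koszul algebra with period p = 3 and jump degree d, i.e. Ext^n_A(F,F) = Ext^n_A(F,F)_{δ^d_3(n)} for all n ≥ 0. -/

import Mathlib

noncomputable section

/-- The jump function `δ^d_p(n) = ((n − (n mod p))/p)·d + (n mod p)`. -/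
def jump (d p n : ℕ) : ℕ := (n - n % p) / p * d + n % p

/-- A positively graded `F`-algebra `A = ⊕_{i≥0} A_i`. -/
structure GradedAlg (F : Type) [Field F] where
  A : Type
  [ringA : Ring A]
  [algA : Algebra F A]
  grading : ℕ → Submodule F A
  [graded : GradedAlgebra grading]

attribute [instance] GradedAlg.ringA GradedAlg.algA GradedAlg.graded

namespace GradedAlg

variable {F : Type} [Field F] (𝒜 : GradedAlg F)

/-- The graded Jacobson radical `J = ⊕_{i≥1} A_i`, i.e. the irrelevant ideal. -/
def jideal : Ideal 𝒜.A := (HomogeneousIdeal.irrelevant 𝒜.grading).toIdeal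

/-- The standing assumptions: `A_0` is a semisimple Artin algebra, `A` is generated in
degrees 0 and 1 (`A_i · A_j = A_{i+j}`), and `A_1` is finite dimensional over `F`. -/
structure Standing : Prop where
  semisimple : IsSemisimpleRing ↥(𝒜.grading 0)
  artinian : IsArtinianRing ↥(𝒜.grading 0)
  gen01 : ∀ i j : ℕ, 𝒜.grading i * 𝒜.grading j = 𝒜.grading (i + j)
  findim : FiniteDimensional F ↥(𝒜.grading 1)

/-- A (ℤ-)graded module over the graded algebra `𝒜`. -/
structure GMod where
  M : Type
  [acg : AddCommGroup M]
  [modF : Module F M]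
  [modA : Module 𝒜.A M]
  [tower : IsScalarTower F 𝒜.A M]
  [scomm : SMulCommClass 𝒜.A F M]
  grading : ℤ → Submodule F M
  sup_eq_top : (⨆ j : ℤ, grading j) = ⊤
  indep : iSupIndep grading
  smul_mem : ∀ {i : ℕ} {j : ℤ} {a : 𝒜.A} {m : M},
    a ∈ 𝒜.grading i → m ∈ grading j → a • m ∈ grading ((i : ℤ) + j)

attribute [instance] GMod.acg GMod.modF GMod.modA GMod.tower GMod.scomm

variable {𝒜}

/-- A degree-zero morphism of graded modules. -/
structure GHom (M N : 𝒜.GMod) where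
  lin : M.M →ₗ[𝒜.A] N.M
  grad : ∀ (j : ℤ) (x : M.M), x ∈ M.grading j → lin x ∈ N.grading j

/-- A graded module is generated in degree `s` if `A · M_s = M`. -/
def GMod.GenInDeg (M : 𝒜.GMod) (s : ℤ) : Prop :=
  Submodule.span 𝒜.A (M.grading s : Set M.M) = ⊤

/-- `T` is the trivial graded module `A_0 = A/J`, concentrated in degree `0`. -/
def IsTrivialGMod (T : 𝒜.GMod) : Prop :=
  (∀ j : ℤ, j ≠ 0 → T.grading j = ⊥) ∧
    Nonempty (T.M ≃ₗ[𝒜.A] (𝒜.A ⧸ 𝒜.jideal))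

/-- A minimal graded projective resolution
`⋯ → P_{n+1} → P_n → ⋯ → P_0 → M → 0` of the graded module `M`,
with finitely generated terms. -/
structure MinRes (M : 𝒜.GMod) where
  P : ℕ → 𝒜.GMod
  d : ∀ n : ℕ, GHom (P (n + 1)) (P n)
  aug : GHom (P 0) M
  fg : ∀ n, Module.Finite 𝒜.A (P n).M
  projective : ∀ n, Module.Projective 𝒜.A (P n).M
  aug_surj : Function.Surjective aug.lin
  exact_aug : LinearMap.range (d 0).lin = LinearMap.ker aug.lin
  exact : ∀ n, LinearMap.range (d (n + 1)).lin = LinearMap.ker (d n).lin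
  minimal : ∀ n, LinearMap.range (d n).lin ≤ 𝒜.jideal • (⊤ : Submodule 𝒜.A (P n).M)

variable (𝒜)

/-- `M` is a piecewise-Koszul module (period `p`, jump degree `d`, shift `s`):
it has a minimal graded projective resolution with `P_n` generated in degree `δ^d_p(n) + s`. -/
def IsPKMod (p d : ℕ) (s : ℤ) (M : 𝒜.GMod) : Prop :=
  ∃ R : MinRes M, ∀ n : ℕ, (R.P n).GenInDeg ((jump d p n : ℤ) + s)

/-- `A` is a piecewise-Koszul algebra (period `p`, jump degree `d`): the trivial module `T`
admits a minimal graded projective resolution with `P_n` generated in degree `δ^d_p(n)`. -/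
def IsPKAlg (p d : ℕ) (T : 𝒜.GMod) : Prop := IsPKMod 𝒜 p d 0 T

/-- A Koszul module: a minimal graded projective resolution with `P_n` generated in degree `n`. -/
def IsKoszulMod (M : 𝒜.GMod) : Prop :=
  ∃ R : MinRes M, ∀ n : ℕ, (R.P n).GenInDeg (n : ℤ)

variable {𝒜}

section Ext

variable (T : 𝒜.GMod) {M : 𝒜.GMod}

/-- The space of `A`-linear maps `P_n → T` (cochains). -/
abbrev HomSp (R : MinRes M) (n : ℕ) := (R.P n).M →ₗ[𝒜.A] T.M

/-- Precomposition, as an `F`-linear map on cochains. -/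
def precompF {M₁ M₂ : 𝒜.GMod} (g : M₁.M →ₗ[𝒜.A] M₂.M) :
    (M₂.M →ₗ[𝒜.A] T.M) →ₗ[F] (M₁.M →ₗ[𝒜.A] T.M) where
  toFun f := f ∘ₗ g
  map_add' f₁ f₂ := by ext x; simp
  map_smul' c f := by ext x; simp

/-- Cocycles: maps `P_n → T` vanishing on the image of `P_{n+1}`. -/
def cocyc (R : MinRes M) (n : ℕ) : Submodule F (HomSp T R n) :=
  LinearMap.ker (precompF T (R.d n).lin)

/-- Coboundaries: maps `P_n → T` factoring through `d_{n-1}`. -/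
def cobound (R : MinRes M) : (n : ℕ) → Submodule F (HomSp T R n)
  | 0 => ⊥
  | n + 1 => LinearMap.range (precompF T (R.d n).lin)

/-- The coboundaries, viewed inside the cocycles. -/
def extRel (R : MinRes M) (n : ℕ) : Submodule F ↥(cocyc T R n) :=
  (cobound T R n).comap (cocyc T R n).subtype

/-- `Ext^n_A(M, T)`, computed from the resolution `R` of `M`. -/
abbrev ExtQ (R : MinRes M) (n : ℕ) := ↥(cocyc T R n) ⧸ extRel T R n

/-- The class in `Ext^n_A(M,T)` of a cocycle. -/
def extCls {R : MinRes M} {n : ℕ} {f : HomSp T R n} (hf : f ∈ cocyc T R n) :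
    ExtQ T R n :=
  Submodule.Quotient.mk ⟨f, hf⟩

/-- Cochains of shift-degree `j`: maps `P_n → T` vanishing on every `(P_n)_i` with `i ≠ j`. -/
def homDeg (R : MinRes M) (n : ℕ) (j : ℤ) : Submodule F (HomSp T R n) where
  carrier := {f | ∀ i : ℤ, i ≠ j → ∀ x ∈ (R.P n).grading i, f x = 0}
  add_mem' := fun hf hg i hi x hx => by
    simp only [LinearMap.add_apply, hf i hi x hx, hg i hi x hx, add_zero]
  zero_mem' := fun i hi x hx => rfl
  smul_mem' := fun c f hf i hi x hx => by
    simp only [LinearMap.smul_apply, hf i hi x hx, smul_zero]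

/-- The shift-degree `j` component `Ext^n_A(M,T)_j`. -/
def extComp (R : MinRes M) (n : ℕ) (j : ℤ) : Submodule F (ExtQ T R n) :=
  Submodule.map (extRel T R n).mkQ ((homDeg T R n j).comap (cocyc T R n).subtype)

/-- Transport `Ext` along an equality of cohomological degrees. -/
def extCast (R : MinRes M) {a b : ℕ} (h : a = b) : ExtQ T R a ≃ₗ[F] ExtQ T R b :=
  h ▸ LinearEquiv.refl F (ExtQ T R a)

/-- A chain map lifting of a cochain `g : P_j → T` over the resolutions `RM` of `M`
and `RT` of `T`. -/
structure ChainLift (RT : MinRes T) (RM : MinRes M) (j : ℕ)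
    (g : (RM.P j).M →ₗ[𝒜.A] T.M) where
  ℓ : ∀ m k : ℕ, m = k + j → ((RM.P m).M →ₗ[𝒜.A] (RT.P k).M)
  comm_aug : RT.aug.lin ∘ₗ ℓ j 0 (by omega) = g
  comm : ∀ k : ℕ, (RT.d k).lin ∘ₗ ℓ (k + j + 1) (k + 1) (by omega) =
    ℓ (k + j) k rfl ∘ₗ (RM.d (k + j)).lin

/-- `μ` is the (bigraded family of) Yoneda product(s)
`Ext^i(T,T) ⊗ Ext^j(M,T) → Ext^{i+j}(M,T)`: it is computed by composing a cocycle
`f : P_i → T` with a chain lifting of a cocycle `g : Q_j → T`. -/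
def IsYonedaMul (RT : MinRes T) (RM : MinRes M)
    (μ : ∀ i j : ℕ, ExtQ T RT i →ₗ[F] ExtQ T RM j →ₗ[F] ExtQ T RM (i + j)) : Prop :=
  ∀ (i j : ℕ) (f : HomSp T RT i) (hf : f ∈ cocyc T RT i)
    (g : HomSp T RM j) (hg : g ∈ cocyc T RM j)
    (L : ChainLift T RT RM j g)
    (hc : f ∘ₗ L.ℓ (i + j) i (by omega) ∈ cocyc T RM (i + j)),
    μ i j (extCls T hf) (extCls T hg) = extCls T hc

/-- `E(A) = Ext^*_A(A_0,A_0)` is generated in the ext-degrees belonging to `S`. -/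
def ExtGenIn (RT : MinRes T)
    (μ : ∀ i j : ℕ, ExtQ T RT i →ₗ[F] ExtQ T RT j →ₗ[F] ExtQ T RT (i + j))
    (S : Set ℕ) : Prop :=
  ∀ W : (n : ℕ) → Submodule F (ExtQ T RT n),
    (∀ n ∈ S, W n = ⊤) →
    (∀ (i j : ℕ) (x : ExtQ T RT i) (y : ExtQ T RT j),
      x ∈ W i → y ∈ W j → μ i j x y ∈ W (i + j)) →
    ∀ n, W n = ⊤

/-- `E(M) = Ext^*_A(M,A_0)` is generated in degree `0` as a graded `E(A)`-module. -/
def ExtModGenInZero (RT : MinRes T) (RM : MinRes M)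
    (μ : ∀ i j : ℕ, ExtQ T RT i →ₗ[F] ExtQ T RM j →ₗ[F] ExtQ T RM (i + j)) : Prop :=
  ∀ W : (n : ℕ) → Submodule F (ExtQ T RM n),
    W 0 = ⊤ →
    (∀ (i j : ℕ) (x : ExtQ T RT i) (y : ExtQ T RM j),
      y ∈ W j → μ i j x y ∈ W (i + j)) →
    ∀ n, W n = ⊤

end Ext

/-- `JM` is (a graded module isomorphic to) the submodule `J·M` of `M`. -/
def IsJM (M JM : 𝒜.GMod) : Prop :=
  ∃ e : JM.M ≃ₗ[𝒜.A] ↥(𝒜.jideal • (⊤ : Submodule 𝒜.A M.M)),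
    ∀ (j : ℤ) (x : JM.M), x ∈ JM.grading j ↔ ((e x : M.M) ∈ M.grading j)

/-- `Q` is (a graded module isomorphic to) the quotient `M/JM`. -/
def IsQuotJM (M Q : 𝒜.GMod) : Prop :=
  ∃ e : Q.M ≃ₗ[𝒜.A] (M.M ⧸ (𝒜.jideal • (⊤ : Submodule 𝒜.A M.M))),
    ∀ j : ℤ, Q.grading j = Submodule.map
      ((e.symm.toLinearMap ∘ₗ (𝒜.jideal • (⊤ : Submodule 𝒜.A M.M)).mkQ).restrictScalars F)
      (M.grading j)

/-- `W` is (isomorphic to) the `n`-th syzygy `Ω^n(M)` of `M` in the minimal graded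
projective resolution `R`. -/
def IsSyzygy {M : 𝒜.GMod} (R : MinRes M) : ℕ → 𝒜.GMod → Prop
  | 0, W => ∃ e : W.M ≃ₗ[𝒜.A] M.M,
      ∀ (j : ℤ) (x : W.M), x ∈ W.grading j ↔ e x ∈ M.grading j
  | 1, W => ∃ e : W.M ≃ₗ[𝒜.A] ↥(LinearMap.ker R.aug.lin),
      ∀ (j : ℤ) (x : W.M), x ∈ W.grading j ↔ ((e x : (R.P 0).M) ∈ (R.P 0).grading j)
  | (n + 2), W => ∃ e : W.M ≃ₗ[𝒜.A] ↥(LinearMap.ker (R.d n).lin),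
      ∀ (j : ℤ) (x : W.M), x ∈ W.grading j ↔ ((e x : (R.P (n + 1)).M) ∈ (R.P (n + 1)).grading j)

end GradedAlg

namespace AInf

variable (F : Type) [Field F]

theorem mem_decomp_le {n : ℕ} {rs : ℕ × ℕ}
    (h : rs ∈ ((Finset.range (n + 1)) ×ˢ (Finset.Icc 1 n)).filter
      fun rs => rs.1 + rs.2 ≤ n) :
    rs.1 + rs.2 ≤ n := (Finset.mem_filter.mp h).2

theorem mem_decomp_one_le {n : ℕ} {rs : ℕ × ℕ}
    (h : rs ∈ ((Finset.range (n + 1)) ×ˢ (Finset.Icc 1 n)).filter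
      fun rs => rs.1 + rs.2 ≤ n) :
    1 ≤ rs.2 :=
  (Finset.mem_Icc.mp (Finset.mem_product.mp (Finset.mem_filter.mp h).1).2).1

/-- The tuple `(x_1, …, x_r, m_s(x_{r+1}, …, x_{r+s}), x_{r+s+1}, …, x_n)` appearing in
the Stasheff identity `SI(n)`. -/
def insertAt {V : Type} [AddCommGroup V] [Module F V]
    (m : (q : ℕ) → MultilinearMap F (fun _ : Fin q => V) V)
    (n r s : ℕ) (hrs : r + s ≤ n) (hs : 1 ≤ s) (x : Fin n → V) :
    Fin (r + 1 + (n - r - s)) → V := fun k =>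
  if hk : (k : ℕ) < r then x ⟨(k : ℕ), by omega⟩
  else if hk' : (k : ℕ) = r then
    m s (fun l => x ⟨r + (l : ℕ), by have := l.isLt; omega⟩)
  else x ⟨(k : ℕ) + s - 1, by have := k.isLt; omega⟩

/-- A (minimal, bigraded) `A_∞`-algebra over `F`: a bigraded vector space
`E = ⊕ E^n_j` (first degree the cohomological/ext degree, second degree the
shift degree) together with multilinear operations `m_q` of degree `(2 − q, 0)`
satisfying the Stasheff identities `SI(n)` (with Koszul signs) on homogeneous
elements, and with `m_1 = 0`. -/
structure BigradedAInfty where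
  V : Type
  [acg : AddCommGroup V]
  [modF : Module F V]
  comp : ℤ → ℤ → Submodule F V
  m : (q : ℕ) → MultilinearMap F (fun _ : Fin q => V) V
  m_one : m 1 = 0
  sup_comp : (⨆ n : ℤ, ⨆ j : ℤ, comp n j) = ⊤
  hom_degree : ∀ (q : ℕ), 1 ≤ q → ∀ (ι σ : Fin q → ℤ) (x : Fin q → V),
    (∀ t, x t ∈ comp (ι t) (σ t)) →
    m q x ∈ comp ((∑ t, ι t) + 2 - q) (∑ t, σ t)
  stasheff : ∀ (n : ℕ) (ι σ : Fin n → ℤ) (x : Fin n → V),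
    (∀ t, x t ∈ comp (ι t) (σ t)) →
    ∑ rs ∈ (((Finset.range (n + 1)) ×ˢ (Finset.Icc 1 n)).filter
        fun rs => rs.1 + rs.2 ≤ n).attach,
      (((Int.negOnePow ((rs.1.1 : ℤ) + (rs.1.2 : ℤ) * ((n - rs.1.1 - rs.1.2 : ℕ) : ℤ) +
          (rs.1.2 : ℤ) *
            ∑ t ∈ Finset.univ.filter (fun t : Fin n => (t : ℕ) < rs.1.1), ι t)) : ℤˣ) : ℤ) •
        m (rs.1.1 + 1 + (n - rs.1.1 - rs.1.2))
          (insertAt F m n rs.1.1 rs.1.2 (mem_decomp_le rs.2) (mem_decomp_one_le rs.2) x)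
      = 0

attribute [instance] BigradedAInfty.acg BigradedAInfty.modF

variable {F}

/-- The ext-degree-`n` component `E^n = ⊕_j E^n_j`. -/
def Edeg (S : BigradedAInfty F) (n : ℤ) : Submodule F S.V := ⨆ j : ℤ, S.comp n j

variable (F)

open GradedAlg in
/-- The bigraded `A_∞`-algebra `S` is an `A_∞`-structure *on the Koszul dual `E(A)`*:
its components vanish in negative ext-degrees and are identified with the bigraded Ext
groups `Ext^n_A(A_0,A_0)_j` in such a way that `m_2` is the Yoneda product `μ`. -/
structure AInftyOnExt {F : Type} [Field F] (𝒜 : GradedAlg F) (T : 𝒜.GMod)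
    (R : GradedAlg.MinRes T)
    (μ : ∀ i j : ℕ, ExtQ T R i →ₗ[F] ExtQ T R j →ₗ[F] ExtQ T R (i + j))
    (S : BigradedAInfty F) where
  comp_neg : ∀ n j : ℤ, n < 0 → S.comp n j = ⊥
  ψ : ∀ n : ℕ, ↥(Edeg S (n : ℤ)) ≃ₗ[F] ExtQ T R n
  ψ_comp : ∀ (n : ℕ) (j : ℤ),
    Submodule.map (ψ n).toLinearMap
        ((S.comp (n : ℤ) j).comap (Edeg S (n : ℤ)).subtype) = extComp T R n j
  ψ_mul : ∀ (i j : ℕ) (x y : S.V) (hx : x ∈ Edeg S (i : ℤ)) (hy : y ∈ Edeg S (j : ℤ))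
    (hm : S.m 2 ![x, y] ∈ Edeg S ((i + j : ℕ) : ℤ)),
    ψ (i + j) ⟨S.m 2 ![x, y], hm⟩ = μ i j (ψ i ⟨x, hx⟩) (ψ j ⟨y, hy⟩)

variable {F}

/-- `E` is generated by `E^1` as an `A_∞`-algebra: for every `n ≥ 2`,
`E^n = Σ_{i+j=n} m_2(E^i ⊗ E^j) + Σ m_q(E^{i_1} ⊗ ⋯ ⊗ E^{i_q})`, the sums running over
decompositions `i_1 + ⋯ + i_q + 2 − q = n` with all `i_t ≥ 1`. -/
def GeneratedByE1 (S : BigradedAInfty F) : Prop :=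
  ∀ n : ℤ, 2 ≤ n →
    Edeg S n = Submodule.span F
      {v : S.V | ∃ (q : ℕ) (ι : Fin q → ℤ) (x : Fin q → S.V),
        2 ≤ q ∧ (∀ t, 1 ≤ ι t ∧ x t ∈ Edeg S (ι t)) ∧
        ((∑ t, ι t) + 2 - q = n) ∧ v = S.m q x}

/-- A reduced `(2,l)`-algebra `E` is generated by `E^1`: for every `n ≥ 2`,
`E^n = Σ_{i+j=n, i,j≥1} m_2(E^i ⊗ E^j) + Σ m_l(E^{i_1} ⊗ ⋯ ⊗ E^{i_l})`, the second sum
over decompositions `i_1 + ⋯ + i_l + 2 − l = n` with all `i_t ≥ 1`. -/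
def ReducedGenByE1 (S : BigradedAInfty F) (l : ℕ) : Prop :=
  ∀ n : ℤ, 2 ≤ n →
    Edeg S n = Submodule.span F
      {v : S.V |
        (∃ (i j : ℤ) (x y : S.V), 1 ≤ i ∧ 1 ≤ j ∧ i + j = n ∧
          x ∈ Edeg S i ∧ y ∈ Edeg S j ∧ v = S.m 2 ![x, y]) ∨
        (∃ (ι : Fin l → ℤ) (x : Fin l → S.V),
          (∀ t, 1 ≤ ι t ∧ x t ∈ Edeg S (ι t)) ∧
          ((∑ t, ι t) + 2 - l = n) ∧ v = S.m l x)}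

end AInf

/-! Minimality kills the differentials of `Hom(P, F)`, so `Ext^n = Ext^n_j` means that `P_n / J P_n`
is concentrated in degree `j`; by the graded Nakayama lemma `P_n` is then generated in degree `j`.
For `n = 0, 1` the degrees are `0` and `1` because `A` is generated in degree `1`. For larger `n`
one uses generation of `E(A)` by `E^1`: all operations preserve the internal degree, and on the
only tuples where they may be nonzero `δ^d_3` is compatible with them. For `m_2` this is additivity,
as the residues modulo `3` produce no carry; for `m_{d-1}` the residues `2, 1, …, 1` add up to
`d`, the jump of one period. An arbitrary minimal resolution is compared with the given one by
chain maps which are mutually inverse modulo `J`. -/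

namespace GradedAlg

variable {F : Type} [Field F] {𝒜 : GradedAlg F}

/-! ### Homogeneous components -/

namespace GMod

instance decomposition (M : 𝒜.GMod) : DirectSum.Decomposition M.grading :=
  (DirectSum.isInternal_submodule_of_iSupIndep_of_iSup_eq_top M.indep
    M.sup_eq_top).chooseDecomposition

/-- The projection of a graded module onto its homogeneous component of degree `j`, as an
`F`-linear endomorphism. -/
def proj (M : 𝒜.GMod) (j : ℤ) : M.M →ₗ[F] M.M :=
  (M.grading j).subtype ∘ₗ DirectSum.component F ℤ (fun i => M.grading i) j ∘ₗ
    (DirectSum.decomposeLinearEquiv M.grading).toLinearMap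

variable {M : 𝒜.GMod}

theorem proj_mem (j : ℤ) (x : M.M) : M.proj j x ∈ M.grading j :=
  (DirectSum.decompose M.grading x j).2

theorem proj_of_mem {j : ℤ} {x : M.M} (hx : x ∈ M.grading j) : M.proj j x = x :=
  DirectSum.decompose_of_mem_same M.grading hx

theorem proj_of_mem_ne {i j : ℤ} {x : M.M} (hx : x ∈ M.grading i) (hij : i ≠ j) :
    M.proj j x = 0 :=
  DirectSum.decompose_of_mem_ne M.grading hx hij

@[elab_as_elim]
theorem homogeneous_induction {p : M.M → Prop} (zero : p 0)
    (homogeneous : ∀ i, ∀ x ∈ M.grading i, p x) (add : ∀ x y, p x → p y → p (x + y))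
    (x : M.M) : p x :=
  DirectSum.Decomposition.inductionOn M.grading zero (fun x => homogeneous _ x x.2) add x

theorem proj_smul {m : ℕ} {a : 𝒜.A} (ha : a ∈ 𝒜.grading m) (i : ℤ) (x : M.M) :
    M.proj i (a • x) = a • M.proj (i - m) x := by
  induction x using homogeneous_induction with
  | zero => simp only [smul_zero, map_zero]
  | homogeneous j x hx =>
    have hax := M.smul_mem ha hx
    by_cases h : j = i - m
    · subst h
      rw [add_sub_cancel] at hax
      rw [proj_of_mem hx, proj_of_mem hax]
    · rw [proj_of_mem_ne hx h, smul_zero, proj_of_mem_ne hax (by omega)]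
  | add x y hx hy => simp only [smul_add, map_add, hx, hy]

end GMod

theorem GHom.lin_proj {M N : 𝒜.GMod} (f : GHom M N) (i : ℤ) (x : M.M) :
    f.lin (M.proj i x) = N.proj i (f.lin x) := by
  induction x using GMod.homogeneous_induction with
  | zero => simp only [map_zero]
  | homogeneous j x hx =>
    obtain rfl | h := eq_or_ne j i
    · rw [GMod.proj_of_mem hx, GMod.proj_of_mem (f.grad j x hx)]
    · rw [GMod.proj_of_mem_ne hx h, GMod.proj_of_mem_ne (f.grad j x hx) h, map_zero]
  | add x y hx hy => simp only [map_add, hx, hy]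

section DegZeroPart

variable {M N : 𝒜.GMod} (f : M.M →ₗ[𝒜.A] N.M)

/-- The `F`-linear map sending a homogeneous `x` of degree `i` to the degree-`i` component of
`f x`; it underlies `degZeroPart`. -/
def degZeroLin : M.M →ₗ[F] N.M :=
  DirectSum.toModule F ℤ N.M
      (fun i => N.proj i ∘ₗ f.restrictScalars F ∘ₗ (M.grading i).subtype) ∘ₗ
    (DirectSum.decomposeLinearEquiv M.grading).toLinearMap

theorem degZeroLin_of_mem {i : ℤ} {x : M.M} (hx : x ∈ M.grading i) :
    degZeroLin f x = N.proj i (f x) := by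
  lift x to M.grading i using hx
  simp only [degZeroLin, LinearMap.comp_apply, LinearEquiv.coe_coe,
    DirectSum.decomposeLinearEquiv_apply, DirectSum.decompose_coe]
  exact DirectSum.toModule_lof F (M := fun i => M.grading i) i x

theorem degZeroLin_smul (a : 𝒜.A) (x : M.M) :
    degZeroLin f (a • x) = a • degZeroLin f x := by
  induction a using DirectSum.Decomposition.inductionOn 𝒜.grading with
  | zero => simp only [zero_smul, map_zero]
  | @homogeneous m a =>
    induction x using GMod.homogeneous_induction with
    | zero => simp only [smul_zero, map_zero]
    | homogeneous i x hx =>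
      rw [degZeroLin_of_mem f (M.smul_mem a.2 hx), degZeroLin_of_mem f hx, map_smul,
        GMod.proj_smul a.2, add_sub_cancel_left]
    | add x y hx hy => simp only [smul_add, map_add, hx, hy]
  | add a b ha hb => simp only [add_smul, map_add, ha, hb]

/-- The degree-zero component of an `A`-linear map between graded modules. -/
def degZeroPart : GHom M N where
  lin := { degZeroLin f with map_smul' := degZeroLin_smul f }
  grad i x hx := (degZeroLin_of_mem f hx).symm ▸ GMod.proj_mem i (f x)

theorem degZeroPart_lin_of_mem {i : ℤ} {x : M.M} (hx : x ∈ M.grading i) :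
    (degZeroPart f).lin x = N.proj i (f x) :=
  degZeroLin_of_mem f hx

end DegZeroPart

/-! ### The graded radical -/

theorem mem_jideal_of_mem_grading {m : ℕ} (hm : 1 ≤ m) {a : 𝒜.A} (ha : a ∈ 𝒜.grading m) :
    a ∈ 𝒜.jideal :=
  HomogeneousIdeal.mem_irrelevant_of_mem 𝒜.grading hm ha

theorem mem_jideal_iff {a : 𝒜.A} :
    a ∈ 𝒜.jideal ↔ (DirectSum.decompose 𝒜.grading a 0 : 𝒜.A) = 0 :=
  HomogeneousIdeal.mem_irrelevant_iff 𝒜.grading a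

instance jideal_isTwoSided : 𝒜.jideal.IsTwoSided :=
  inferInstanceAs (RingHom.ker (GradedRing.projZeroRingHom 𝒜.grading)).IsTwoSided

theorem one_notMem_jideal [Nontrivial 𝒜.A] : (1 : 𝒜.A) ∉ 𝒜.jideal := by
  rw [mem_jideal_iff, DirectSum.decompose_of_mem_same _ SetLike.GradedOne.one_mem]
  exact one_ne_zero

theorem exists_sub_smul_one_mem_jideal (h0 : 𝒜.grading 0 = Submodule.span F {1}) (a : 𝒜.A) :
    ∃ c : F, a - c • (1 : 𝒜.A) ∈ 𝒜.jideal := by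
  have ha : (DirectSum.decompose 𝒜.grading a 0 : 𝒜.A) ∈ Submodule.span F {1} :=
    h0 ▸ SetLike.coe_mem _
  obtain ⟨c, hc⟩ := Submodule.mem_span_singleton.1 ha
  refine ⟨c, mem_jideal_iff.2 ?_⟩
  rw [hc, DirectSum.decompose_sub, DirectSum.sub_apply, AddSubgroupClass.coe_sub,
    DirectSum.decompose_coe, DirectSum.of_eq_same, sub_self]

/-- The submodule `JM` of a graded module `M`. -/
def GMod.rad (M : 𝒜.GMod) : Submodule 𝒜.A M.M := 𝒜.jideal • ⊤

theorem smul_mem_rad {M : 𝒜.GMod} {a : 𝒜.A} (ha : a ∈ 𝒜.jideal) (x : M.M) :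
    a • x ∈ M.rad :=
  Submodule.smul_mem_smul ha trivial

theorem map_mem_rad {M N : 𝒜.GMod} (f : M.M →ₗ[𝒜.A] N.M) {x : M.M} (hx : x ∈ M.rad) :
    f x ∈ N.rad := by
  have hfx := Submodule.mem_map_of_mem (f := f) hx
  rw [GMod.rad, Submodule.map_smul''] at hfx
  exact Submodule.smul_mono le_rfl le_top hfx

theorem mem_rad_of_map_mem_smul_range {M N : 𝒜.GMod} {f : M.M →ₗ[𝒜.A] N.M}
    (hker : LinearMap.ker f ≤ M.rad) {x : M.M} (hx : f x ∈ 𝒜.jideal • LinearMap.range f) :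
    x ∈ M.rad := by
  rw [LinearMap.range_eq_map, ← Submodule.map_smul''] at hx
  obtain ⟨y, hy, hyx⟩ := hx
  exact (Submodule.sub_mem_iff_left _ hy).1 (hker (LinearMap.sub_mem_ker_iff.2 hyx.symm))

theorem IsTrivialGMod.rad_eq_bot {T : 𝒜.GMod} (hT : IsTrivialGMod T) : T.rad = ⊥ := by
  obtain ⟨-, ⟨e⟩⟩ := hT
  rw [GMod.rad, eq_bot_iff, Submodule.smul_le]
  rintro a ha t -
  obtain ⟨b, hb⟩ := Submodule.Quotient.mk_surjective _ (e t)
  have hab : a • b ∈ 𝒜.jideal := 𝒜.jideal.mul_mem_right b ha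
  rwa [Submodule.mem_bot, ← e.map_eq_zero_iff, map_smul, ← hb, ← Submodule.Quotient.mk_smul,
    Submodule.Quotient.mk_eq_zero]

theorem IsTrivialGMod.nontrivial [Nontrivial 𝒜.A] {T : 𝒜.GMod} (hT : IsTrivialGMod T) :
    Nontrivial T.M := by
  obtain ⟨-, ⟨e⟩⟩ := hT
  have : Nontrivial (𝒜.A ⧸ 𝒜.jideal) :=
    Submodule.Quotient.nontrivial_iff.2 ((Ideal.ne_top_iff_one _).2 one_notMem_jideal)
  exact e.toEquiv.nontrivial

theorem mem_of_mem_grading_of_mem_rad {M : 𝒜.GMod} {i : ℤ} {x : M.M} (hx : x ∈ M.grading i)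
    (hrad : x ∈ M.rad) (N : Submodule F M.M)
    (hN : ∀ m : ℕ, 1 ≤ m → ∀ a ∈ 𝒜.grading m, ∀ p ∈ M.grading (i - m), a • p ∈ N) :
    x ∈ N := by
  classical
  suffices h : ∀ y ∈ M.rad, M.proj i y ∈ N from GMod.proj_of_mem hx ▸ h x hrad
  intro y hy
  induction hy using Submodule.smul_induction_on' with
  | smul a ha z _ =>
    rw [← DirectSum.sum_support_decompose 𝒜.grading a, Finset.sum_smul, map_sum]
    refine Submodule.sum_mem _ fun m hm => ?_
    have hm0 : m ≠ 0 := by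
      rintro rfl
      exact DFinsupp.mem_support_iff.1 hm (Subtype.ext (mem_jideal_iff.1 ha))
    rw [GMod.proj_smul (SetLike.coe_mem _)]
    exact hN m (Nat.one_le_iff_ne_zero.2 hm0) _ (SetLike.coe_mem _) _ (GMod.proj_mem _ _)
  | add y _ z _ hy hz => exact map_add (M.proj i) y z ▸ N.add_mem hy hz

/-- The graded module `M/JM` is concentrated in degree `j`, phrased inside `M`. -/
def GMod.TopInDeg (M : 𝒜.GMod) (j : ℤ) : Prop :=
  ∀ i : ℤ, i ≠ j → ∀ x ∈ M.grading i, x ∈ M.rad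

theorem IsTrivialGMod.topInDeg {T : 𝒜.GMod} (hT : IsTrivialGMod T) : T.TopInDeg 0 := by
  intro i hi x hx
  rw [hT.1 i hi, Submodule.mem_bot] at hx
  exact hx ▸ T.rad.zero_mem

/-! ### Graded Nakayama lemma -/

namespace GMod

/-- The submodule of elements whose components in degrees below `b` vanish. -/
def geDeg (M : 𝒜.GMod) (b : ℤ) : Submodule 𝒜.A M.M where
  carrier := {x | ∀ i < b, M.proj i x = 0}
  add_mem' hx hy i hi := by rw [map_add, hx i hi, hy i hi, add_zero]
  zero_mem' i _ := map_zero _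
  smul_mem' a x hx i hi := by
    induction a using DirectSum.Decomposition.inductionOn 𝒜.grading with
    | zero => rw [zero_smul, map_zero]
    | homogeneous a => rw [proj_smul a.2, hx _ (by omega), smul_zero]
    | add a b ha hb => rw [add_smul, map_add, ha, hb, add_zero]

theorem geDeg_antitone (M : 𝒜.GMod) : Antitone M.geDeg :=
  fun _ _ h _ hx i hi => hx i (hi.trans_le h)

theorem exists_mem_geDeg {M : 𝒜.GMod} (x : M.M) : ∃ b, x ∈ M.geDeg b := by
  induction x using homogeneous_induction with
  | zero => exact ⟨0, zero_mem _⟩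
  | homogeneous i x hx => exact ⟨i, fun j hj => proj_of_mem_ne hx hj.ne'⟩
  | add x y hx hy =>
    obtain ⟨b, hb⟩ := hx
    obtain ⟨c, hc⟩ := hy
    exact ⟨min b c, add_mem (M.geDeg_antitone (min_le_left b c) hb)
      (M.geDeg_antitone (min_le_right b c) hc)⟩

theorem exists_geDeg_eq_top (M : 𝒜.GMod) [hM : Module.Finite 𝒜.A M.M] :
    ∃ b, M.geDeg b = ⊤ := by
  obtain ⟨s, hs⟩ := hM.fg_top
  choose b hb using exists_mem_geDeg (M := M)
  obtain ⟨c, hc⟩ := (s.image b).bddBelow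
  refine ⟨c, eq_top_iff.2 (hs ▸ Submodule.span_le.2 fun x hx => ?_)⟩
  exact M.geDeg_antitone (hc (Finset.mem_image_of_mem b hx)) (hb x)

theorem TopInDeg.genInDeg {M : 𝒜.GMod} [Module.Finite 𝒜.A M.M] {j : ℤ} (h : M.TopInDeg j) :
    M.GenInDeg j := by
  obtain ⟨b, hb⟩ := M.exists_geDeg_eq_top
  have hlow : ∀ i < b, ∀ x ∈ M.grading i, x = 0 := fun i hi x hx =>
    proj_of_mem hx ▸ (hb ▸ Submodule.mem_top : x ∈ M.geDeg b) i hi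
  have hspan : ∀ k : ℕ, ∀ i < b + k, ∀ x ∈ M.grading i,
      x ∈ Submodule.span 𝒜.A (M.grading j : Set M.M) := by
    intro k
    induction k with
    | zero => exact fun i hi x hx => hlow i (by simpa using hi) x hx ▸ zero_mem _
    | succ k ih =>
      intro i hi x hx
      obtain rfl | hij := eq_or_ne i j
      · exact Submodule.subset_span hx
      · exact mem_of_mem_grading_of_mem_rad hx (h i hij x hx)
          ((Submodule.span 𝒜.A (M.grading j : Set M.M)).restrictScalars F)
          fun m hm a _ p hp => Submodule.smul_mem _ a (ih (i - m) (by omega) p hp)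
  refine eq_top_iff.2 fun x _ => ?_
  induction x using homogeneous_induction with
  | zero => exact zero_mem _
  | homogeneous i x hx => exact hspan (i - b + 1).toNat i (by omega) x hx
  | add x y hx hy => exact add_mem (hx trivial) (hy trivial)

end GMod

/-! ### Cochains on a minimal resolution -/

section MinimalResolution

variable {M T : 𝒜.GMod} (R : MinRes M)

theorem cocyc_eq_top (hT : T.rad = ⊥) (n : ℕ) : cocyc T R n = ⊤ := by
  refine eq_top_iff.2 fun f _ => LinearMap.ext fun x => ?_
  have hx : f ((R.d n).lin x) ∈ T.rad := map_mem_rad f (R.minimal n ⟨x, rfl⟩)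
  rwa [hT] at hx

theorem cobound_eq_bot (hT : T.rad = ⊥) (n : ℕ) : cobound T R n = ⊥ := by
  cases n with
  | zero => rfl
  | succ n =>
    refine LinearMap.range_eq_bot.2 (LinearMap.ext fun f => ?_)
    exact (cocyc_eq_top R hT n ▸ Submodule.mem_top : f ∈ cocyc T R n)

theorem extComp_eq_top_iff_homDeg_eq_top (hT : T.rad = ⊥) (n : ℕ) (j : ℤ) :
    extComp T R n j = ⊤ ↔ homDeg T R n j = ⊤ := by
  have hrel : extRel T R n = ⊥ := by
    rw [extRel, cobound_eq_bot R hT, Submodule.comap_bot, Submodule.ker_subtype]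
  have hinj : Function.Injective (extRel T R n).mkQ := by
    rw [← LinearMap.ker_eq_bot, Submodule.ker_mkQ, hrel]
  rw [extComp, ← LinearMap.range_eq_top.2 (extRel T R n).mkQ_surjective, ← Submodule.map_top,
    (Submodule.map_injective_of_injective hinj).eq_iff, Submodule.comap_subtype_eq_top,
    cocyc_eq_top R hT, top_le_iff]

end MinimalResolution

theorem map_smul_of_rad_le_ker (h0 : 𝒜.grading 0 = Submodule.span F {1}) {M N : 𝒜.GMod}
    (hN : N.rad = ⊥) (g : M.M →ₗ[F] N.M) (hg : M.rad.restrictScalars F ≤ LinearMap.ker g)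
    (a : 𝒜.A) (x : M.M) : g (a • x) = a • g x := by
  obtain ⟨c, hc⟩ := exists_sub_smul_one_mem_jideal h0 a
  have hgx : (a - c • (1 : 𝒜.A)) • g x = 0 := by
    rw [← Submodule.mem_bot 𝒜.A, ← hN]
    exact smul_mem_rad hc (g x)
  have hgax : g ((a - c • (1 : 𝒜.A)) • x) = 0 := hg (smul_mem_rad hc x)
  rw [sub_smul, smul_assoc, one_smul, sub_eq_zero] at hgx
  rw [sub_smul, smul_assoc, one_smul, map_sub, map_smul g c x, sub_eq_zero] at hgax
  rw [hgx, hgax]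

theorem exists_linearMap_apply_ne_zero (h0 : 𝒜.grading 0 = Submodule.span F {1}) {M N : 𝒜.GMod}
    (hN : N.rad = ⊥) [Nontrivial N.M] {x : M.M} (hx : x ∉ M.rad) :
    ∃ f : M.M →ₗ[𝒜.A] N.M, f x ≠ 0 := by
  obtain ⟨t, ht⟩ := exists_ne (0 : N.M)
  obtain ⟨g, hgx, hg⟩ := Submodule.exists_le_ker_of_notMem (p := M.rad.restrictScalars F) hx
  let f : M.M →ₗ[F] N.M := g.smulRight t
  have hf : M.rad.restrictScalars F ≤ LinearMap.ker f := fun y hy => by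
    rw [LinearMap.mem_ker, LinearMap.smulRight_apply, LinearMap.mem_ker.1 (hg hy), zero_smul]
  exact ⟨{ f with map_smul' := map_smul_of_rad_le_ker h0 hN f hf }, smul_ne_zero hgx ht⟩

theorem extComp_eq_top_iff (h0 : 𝒜.grading 0 = Submodule.span F {1}) {M T : 𝒜.GMod}
    (hT : IsTrivialGMod T) (R : MinRes M) (n : ℕ) (j : ℤ) :
    extComp T R n j = ⊤ ↔ (R.P n).TopInDeg j := by
  rw [extComp_eq_top_iff_homDeg_eq_top R hT.rad_eq_bot]
  constructor
  · intro h i hi x hx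
    by_contra hxrad
    have hA : Nontrivial 𝒜.A := by
      by_contra hA
      have := not_nontrivial_iff_subsingleton.1 hA
      have := Module.subsingleton 𝒜.A (R.P n).M
      exact hxrad (Subsingleton.elim 0 x ▸ zero_mem _)
    have := hT.nontrivial
    obtain ⟨f, hf⟩ := exists_linearMap_apply_ne_zero h0 hT.rad_eq_bot hxrad
    exact hf ((h ▸ Submodule.mem_top : f ∈ homDeg T R n j) i hi x hx)
  · intro h
    refine eq_top_iff.2 fun f _ i hi x hx => ?_
    have hfx : f x ∈ T.rad := map_mem_rad f (h i hi x hx)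
    rwa [hT.rad_eq_bot] at hfx

/-! ### The first two terms of a minimal resolution -/

theorem mem_jideal_smul_rad (hgen : ∀ i, 𝒜.grading i * 𝒜.grading 1 = 𝒜.grading (i + 1))
    {M : 𝒜.GMod} {s : ℤ} (hM : M.TopInDeg s) {i : ℤ} (hi : i ≠ s + 1) {x : M.M}
    (hx : x ∈ M.grading i) (hrad : x ∈ M.rad) : x ∈ 𝒜.jideal • M.rad := by
  refine mem_of_mem_grading_of_mem_rad hx hrad ((𝒜.jideal • M.rad).restrictScalars F)
    fun m hm a ha p hp => ?_
  rw [Submodule.restrictScalars_mem]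
  obtain rfl | hm1 := eq_or_ne m 1
  · have hprad : p ∈ M.rad := hM (i - (1 : ℕ)) (by omega) p hp
    exact Submodule.smul_mem_smul (mem_jideal_of_mem_grading le_rfl ha) hprad
  · rw [show m = m - 1 + 1 by omega, ← hgen] at ha
    induction ha using Submodule.mul_induction_on' with
    | mem_mul_mem b hb c hc =>
      rw [mul_smul]
      exact Submodule.smul_mem_smul (mem_jideal_of_mem_grading (by omega) hb)
        (smul_mem_rad (mem_jideal_of_mem_grading le_rfl hc) p)
    | add a _ b _ ha hb => exact add_smul a b p ▸ add_mem ha hb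

namespace MinRes

variable {M : 𝒜.GMod} (R : MinRes M)

theorem topInDeg_zero {s : ℤ} (hM : M.TopInDeg s) : (R.P 0).TopInDeg s := by
  intro i hi x hx
  have hker : LinearMap.ker R.aug.lin ≤ (R.P 0).rad := R.exact_aug ▸ R.minimal 0
  refine mem_rad_of_map_mem_smul_range hker ?_
  rw [LinearMap.range_eq_top.2 R.aug_surj]
  exact hM i hi _ (R.aug.grad i x hx)

theorem topInDeg_one (hgen : ∀ i, 𝒜.grading i * 𝒜.grading 1 = 𝒜.grading (i + 1))
    (hrad : M.rad = ⊥) {s : ℤ} (hM : M.TopInDeg s) : (R.P 1).TopInDeg (s + 1) := by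
  intro i hi x hx
  have hker : LinearMap.ker (R.d 0).lin ≤ (R.P 1).rad := R.exact 0 ▸ R.minimal 1
  have hrange : (R.P 0).rad ≤ LinearMap.range (R.d 0).lin := by
    intro y hy
    rw [R.exact_aug, LinearMap.mem_ker, ← Submodule.mem_bot 𝒜.A, ← hrad]
    exact map_mem_rad R.aug.lin hy
  refine mem_rad_of_map_mem_smul_range hker (Submodule.smul_mono le_rfl hrange ?_)
  exact mem_jideal_smul_rad hgen (R.topInDeg_zero hM) hi ((R.d 0).grad i x hx)
    (R.minimal 0 ⟨x, rfl⟩)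

end MinRes

/-! ### Comparison of minimal resolutions -/

theorem exists_linearMap_lift_of_range_le {A P N M : Type*} [Ring A] [AddCommGroup P]
    [AddCommGroup N] [AddCommGroup M] [Module A P] [Module A N] [Module A M] [Module.Projective A P]
    (f : N →ₗ[A] M) (g : P →ₗ[A] M) (h : LinearMap.range g ≤ LinearMap.range f) :
    ∃ k : P →ₗ[A] N, ∀ x, f (k x) = g x := by
  obtain ⟨k, hk⟩ := Module.projective_lifting_property f.rangeRestrict
    (g.codRestrict (LinearMap.range f) fun x => h ⟨x, rfl⟩) f.surjective_rangeRestrict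
  exact ⟨k, fun x => congrArg Subtype.val (LinearMap.congr_fun hk x)⟩

theorem GHom.exists_lift_of_range_le {P N M : 𝒜.GMod} [Module.Projective 𝒜.A P.M]
    (f : GHom N M) (g : GHom P M) (h : LinearMap.range g.lin ≤ LinearMap.range f.lin) :
    ∃ k : GHom P N, ∀ x, f.lin (k.lin x) = g.lin x := by
  obtain ⟨k, hk⟩ := exists_linearMap_lift_of_range_le f.lin g.lin h
  refine ⟨degZeroPart k, fun x => ?_⟩
  induction x using GMod.homogeneous_induction with
  | zero => simp only [map_zero]
  | homogeneous i x hx =>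
    rw [degZeroPart_lin_of_mem k hx, f.lin_proj, hk, GMod.proj_of_mem (g.grad i x hx)]
  | add x y hx hy => simp only [map_add, hx, hy]

/-- The composite of two degree-zero morphisms. -/
def GHom.comp {M N K : 𝒜.GMod} (g : GHom N K) (f : GHom M N) : GHom M K where
  lin := g.lin ∘ₗ f.lin
  grad j x hx := g.grad j _ (f.grad j x hx)

/-- One stage of a comparison between two resolutions with differentials `π : P → B` and
`π' : P' → B'`: the maps `ψ` and `φ` carry the images of the differentials into one another, and
on the image of `π'` the composite `φ ∘ ψ` differs from the identity by `π' ∘ h`. Only `ψ` has to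
be graded. -/
structure IsComparison {P B P' B' : 𝒜.GMod} (π : GHom P B) (π' : GHom P' B') (ψ : GHom B' B)
    (φ : B.M →ₗ[𝒜.A] B'.M) (h : B'.M →ₗ[𝒜.A] P'.M) : Prop where
  map_range : ∀ x, ψ.lin (π'.lin x) ∈ LinearMap.range π.lin
  inv_range : ∀ x, φ (π.lin x) ∈ LinearMap.range π'.lin
  homotopy : ∀ x, φ (ψ.lin (π'.lin x)) = π'.lin x + π'.lin (h (π'.lin x))

theorem IsComparison.exists_next {Q P B Q' P' B' : 𝒜.GMod} [Module.Projective 𝒜.A P.M]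
    [Module.Projective 𝒜.A P'.M] {π : GHom P B} {π' : GHom P' B'} {ψ : GHom B' B}
    {φ : B.M →ₗ[𝒜.A] B'.M} {h : B'.M →ₗ[𝒜.A] P'.M} (hc : IsComparison π π' ψ φ h)
    {D : GHom Q P} {D' : GHom Q' P'} (hD : LinearMap.range D.lin = LinearMap.ker π.lin)
    (hD' : LinearMap.range D'.lin = LinearMap.ker π'.lin) :
    ∃ (ψ' : GHom P' P) (φ' : P.M →ₗ[𝒜.A] P'.M) (h' : P'.M →ₗ[𝒜.A] Q'.M),
      IsComparison D D' ψ' φ' h' ∧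
        ∀ x, φ' (ψ'.lin x) = x + D'.lin (h' x) + h (π'.lin x) := by
  obtain ⟨ψ', hψ'⟩ : ∃ ψ' : GHom P' P, ∀ x, π.lin (ψ'.lin x) = ψ.lin (π'.lin x) :=
    π.exists_lift_of_range_le (ψ.comp π') (by rintro _ ⟨x, rfl⟩; exact hc.map_range x)
  obtain ⟨φ', hφ'⟩ : ∃ φ' : P.M →ₗ[𝒜.A] P'.M, ∀ x, π'.lin (φ' x) = φ (π.lin x) :=
    exists_linearMap_lift_of_range_le π'.lin (φ ∘ₗ π.lin)
      (by rintro _ ⟨x, rfl⟩; exact hc.inv_range x)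
  have hcycle : ∀ x, π'.lin (φ' (ψ'.lin x) - x - h (π'.lin x)) = 0 := fun x => by
    rw [map_sub, map_sub, hφ', hψ', hc.homotopy, add_sub_cancel_left, sub_self]
  obtain ⟨h', hh'⟩ := exists_linearMap_lift_of_range_le D'.lin
    (φ' ∘ₗ ψ'.lin - LinearMap.id - h ∘ₗ π'.lin) (by
      rw [hD']; rintro _ ⟨x, rfl⟩; exact hcycle x)
  have hhtpy : ∀ x, φ' (ψ'.lin x) = x + D'.lin (h' x) + h (π'.lin x) := fun x => by
    rw [hh' x]
    simp only [LinearMap.sub_apply, LinearMap.comp_apply, LinearMap.id_apply]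
    abel
  have hπD : ∀ x, π.lin (D.lin x) = 0 := fun x => LinearMap.mem_ker.1 (hD ▸ ⟨x, rfl⟩)
  have hπD' : ∀ x, π'.lin (D'.lin x) = 0 := fun x => LinearMap.mem_ker.1 (hD' ▸ ⟨x, rfl⟩)
  refine ⟨ψ', φ', h', ⟨fun x => ?_, fun x => ?_, fun x => ?_⟩, hhtpy⟩
  · rw [hD, LinearMap.mem_ker, hψ', hπD', map_zero]
  · rw [hD', LinearMap.mem_ker, hφ', hπD, map_zero]
  · rw [hhtpy, hπD', map_zero, add_zero]

namespace MinRes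

variable {M : 𝒜.GMod} (R R' : MinRes M)

/-- Each step changes `φ ∘ ψ` from the identity only by maps factoring through a differential of
`R'`, whose image lies in the radical. -/
theorem exists_comparison (n : ℕ) :
    ∃ (ψ : GHom (R'.P n) (R.P n)) (φ : (R.P n).M →ₗ[𝒜.A] (R'.P n).M)
      (h : (R'.P n).M →ₗ[𝒜.A] (R'.P (n + 1)).M),
      IsComparison (R.d n) (R'.d n) ψ φ h ∧ ∀ x, φ (ψ.lin x) - x ∈ (R'.P n).rad := by
  induction n with
  | zero =>
    have := R.projective 0
    have := R'.projective 0
    have hc : IsComparison R.aug R'.aug ⟨LinearMap.id, fun _ _ => id⟩ LinearMap.id 0 :=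
      ⟨fun _ => R.aug_surj _, fun _ => R'.aug_surj _, fun _ => by simp⟩
    obtain ⟨ψ, φ, h, hc, hφψ⟩ := hc.exists_next R.exact_aug R'.exact_aug
    refine ⟨ψ, φ, h, hc, fun x => R'.minimal 0 ⟨h x, ?_⟩⟩
    rw [hφψ, LinearMap.zero_apply, add_zero, add_sub_cancel_left]
  | succ n ih =>
    have := R.projective (n + 1)
    have := R'.projective (n + 1)
    obtain ⟨ψ₀, φ₀, h₀, hc, -⟩ := ih
    obtain ⟨ψ, φ, h, hc, hφψ⟩ := hc.exists_next (R.exact n) (R'.exact n)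
    refine ⟨ψ, φ, h, hc, fun x => ?_⟩
    rw [hφψ, add_assoc, add_sub_cancel_left]
    exact add_mem (R'.minimal (n + 1) ⟨h x, rfl⟩) (map_mem_rad h₀ (R'.minimal n ⟨x, rfl⟩))

theorem topInDeg_of_topInDeg {n : ℕ} {j : ℤ} (hR : (R.P n).TopInDeg j) :
    (R'.P n).TopInDeg j := by
  obtain ⟨ψ, φ, -, -, hφψ⟩ := R.exists_comparison R' n
  intro i hi x hx
  have hφψx : φ (ψ.lin x) ∈ (R'.P n).rad := map_mem_rad φ (hR i hi _ (ψ.grad i x hx))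
  exact (Submodule.sub_mem_iff_right _ hφψx).1 (hφψ x)

end MinRes

end GradedAlg

namespace AInf

/-! ### The jump function and the operations of a reduced `(2, l)`-algebra -/

/-- The extension of the jump function `δ^d_3` to all integers. -/
def jumpThree (d : ℕ) (n : ℤ) : ℤ := n / 3 * d + n % 3

theorem natCast_jump_three (d n : ℕ) : (jump d 3 n : ℤ) = jumpThree d n := by
  have hdiv : (n - n % 3) / 3 = n / 3 := by omega
  rw [jump, hdiv]
  push_cast
  rfl

theorem jumpThree_add (d : ℕ) {i j : ℤ} (h : i % 3 + j % 3 < 3) :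
    jumpThree d (i + j) = jumpThree d i + jumpThree d j := by
  have hdiv : (i + j) / 3 = i / 3 + j / 3 := by omega
  have hmod : (i + j) % 3 = i % 3 + j % 3 := by omega
  rw [jumpThree, hdiv, hmod, jumpThree, jumpThree]
  ring

/-- The residues sum to `l + 1`, which is the jump of one period, while `∑ ι + 2 - l` is divisible
by `3` and has absorbed them into one further period. -/
theorem sum_jumpThree {l : ℕ} {ι : Fin l → ℤ} {t₀ : Fin l} (h₀ : ι t₀ % 3 = 2)
    (h₁ : ∀ t, t ≠ t₀ → ι t % 3 = 1) :
    ∑ t, jumpThree (l + 1) (ι t) = jumpThree (l + 1) (∑ t, ι t + 2 - l) := by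
  have hmod : ∑ t, ι t % 3 = l + 1 := by
    have hres : ∀ t, ι t % 3 = 1 + if t = t₀ then 1 else 0 := fun t => by
      split_ifs with ht
      · rw [ht, h₀]; rfl
      · rw [h₁ t ht]; rfl
    simp only [hres, Finset.sum_add_distrib, Finset.sum_const, Finset.card_univ, Fintype.card_fin,
      nsmul_eq_mul, mul_one, Finset.sum_ite_eq', Finset.mem_univ, if_true]
  have htotal : ∑ t, ι t + 2 - l = 3 * (∑ t, ι t / 3 + 1) := by
    have hsplit : ∑ t, ι t = 3 * ∑ t, ι t / 3 + ∑ t, ι t % 3 := by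
      simp only [Finset.mul_sum, ← Finset.sum_add_distrib, Int.mul_ediv_add_emod]
    rw [hsplit, hmod]
    ring
  rw [htotal]
  simp only [jumpThree, Finset.sum_add_distrib, ← Finset.sum_mul, hmod,
    Int.mul_ediv_cancel_left _ three_ne_zero, Int.mul_emod_right]
  push_cast
  ring

variable {F : Type} [Field F]

/-- Conditions (2) and (3) in the definition of a reduced `(2, l)`-algebra, which restrict the
degrees in which `m_2` and `m_l` may be nonzero. -/
structure IsReducedTwoL (S : BigradedAInfty F) (l : ℕ) : Prop where
  m_two_eq_zero : ∀ k₁ k₂ s₁ s₂ : ℕ, (s₁ = 1 ∨ s₁ = 2) → (s₂ = 1 ∨ s₂ = 2) →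
    3 ≤ s₁ + s₂ → s₁ + s₂ ≤ 4 →
    ∀ x y : S.V, x ∈ Edeg S ((3 * k₁ + s₁ : ℕ) : ℤ) →
      y ∈ Edeg S ((3 * k₂ + s₂ : ℕ) : ℤ) → S.m 2 ![x, y] = 0
  m_l_eq_zero : ∀ (ι : Fin l → ℤ) (x : Fin l → S.V), (∀ t, x t ∈ Edeg S (ι t)) →
    (¬ ∃ t₀ : Fin l, ι t₀ % 3 = 2 ∧ ∀ t, t ≠ t₀ → ι t % 3 = 1) → S.m l x = 0

theorem comp_le_edeg (S : BigradedAInfty F) (n j : ℤ) : S.comp n j ≤ Edeg S n :=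
  le_iSup (S.comp n) j

namespace IsReducedTwoL

variable {S : BigradedAInfty F} {l : ℕ}

theorem m_two_mem_comp (hred : IsReducedTwoL S l) {i j : ℤ} (hi : 0 ≤ i) (hj : 0 ≤ j)
    {x y : S.V} (hx : x ∈ S.comp i (jumpThree (l + 1) i))
    (hy : y ∈ S.comp j (jumpThree (l + 1) j)) :
    S.m 2 ![x, y] ∈ S.comp (i + j) (jumpThree (l + 1) (i + j)) := by
  by_cases h : i % 3 + j % 3 < 3
  · have hm := S.hom_degree 2 one_le_two ![i, j]
      ![jumpThree (l + 1) i, jumpThree (l + 1) j] ![x, y]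
      (Fin.forall_fin_two.2 ⟨hx, hy⟩)
    simpa [jumpThree_add _ h] using hm
  · have hi' : i = ((3 * (i / 3).toNat + (i % 3).toNat : ℕ) : ℤ) := by omega
    have hj' : j = ((3 * (j / 3).toNat + (j % 3).toNat : ℕ) : ℤ) := by omega
    rw [hred.m_two_eq_zero (i / 3).toNat (j / 3).toNat (i % 3).toNat (j % 3).toNat
      (by omega) (by omega) (by omega) (by omega) x y
      (hi' ▸ comp_le_edeg S _ _ hx) (hj' ▸ comp_le_edeg S _ _ hy)]
    exact zero_mem _

theorem m_l_mem_comp (hred : IsReducedTwoL S l) {ι : Fin l → ℤ} {x : Fin l → S.V}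
    (hx : ∀ t, x t ∈ S.comp (ι t) (jumpThree (l + 1) (ι t))) :
    S.m l x ∈ S.comp (∑ t, ι t + 2 - l) (jumpThree (l + 1) (∑ t, ι t + 2 - l)) := by
  by_cases h : ∃ t₀ : Fin l, ι t₀ % 3 = 2 ∧ ∀ t, t ≠ t₀ → ι t % 3 = 1
  · obtain ⟨t₀, h₀, h₁⟩ := h
    rw [← sum_jumpThree h₀ h₁]
    exact S.hom_degree l (Nat.one_le_iff_ne_zero.2 (Fin.pos t₀).ne') ι _ x hx
  · rw [hred.m_l_eq_zero ι x (fun t => comp_le_edeg S _ _ (hx t)) h]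
    exact zero_mem _

theorem edeg_le_comp (hred : IsReducedTwoL S l) (hgen : ReducedGenByE1 S l)
    (hE0 : Edeg S 0 ≤ S.comp 0 0) (hE1 : Edeg S 1 ≤ S.comp 1 1) (n : ℕ) :
    Edeg S n ≤ S.comp n (jumpThree (l + 1) n) := by
  induction n using Nat.strong_induction_on with
  | _ n ih =>
  have ihInt : ∀ i : ℤ, 1 ≤ i → i < n → Edeg S i ≤ S.comp i (jumpThree (l + 1) i) := by
    intro i hi hin
    lift i to ℕ using by omega
    exact ih i (by omega)
  obtain rfl | rfl | hn : n = 0 ∨ n = 1 ∨ 2 ≤ n := by omega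
  · simpa [jumpThree] using hE0
  · simpa [jumpThree] using hE1
  rw [hgen n (by omega), Submodule.span_le]
  rintro v (⟨i, j, x, y, hi, hj, hij, hx, hy, rfl⟩ | ⟨ι, x, hιx, hsum, rfl⟩)
  · rw [← hij]
    exact hred.m_two_mem_comp (by omega) (by omega) (ihInt i hi (by omega) hx)
      (ihInt j hj (by omega) hy)
  · have hlt : ∀ t, ι t < n := fun t => by
      have hle : ι t - 1 ≤ ∑ s, (ι s - 1) :=
        Finset.single_le_sum (f := fun s => ι s - 1) (fun s _ => sub_nonneg.2 (hιx s).1)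
          (Finset.mem_univ t)
      simp only [Finset.sum_sub_distrib, Finset.sum_const, Finset.card_univ, Fintype.card_fin,
        nsmul_eq_mul, mul_one] at hle
      omega
    rw [← hsum]
    exact hred.m_l_mem_comp fun t => ihInt (ι t) (hιx t).1 (hlt t) (hιx t).2

end IsReducedTwoL

open GradedAlg in
theorem edeg_le_comp_iff_extComp_eq_top {𝒜 : GradedAlg F} {T : 𝒜.GMod} {R : MinRes T}
    {S : BigradedAInfty F} (ψ : ∀ n : ℕ, Edeg S (n : ℤ) ≃ₗ[F] ExtQ T R n)
    (hψ : ∀ (n : ℕ) (j : ℤ), Submodule.map (ψ n).toLinearMap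
      ((S.comp (n : ℤ) j).comap (Edeg S (n : ℤ)).subtype) = extComp T R n j) (n : ℕ) (j : ℤ) :
    Edeg S n ≤ S.comp n j ↔ extComp T R n j = ⊤ := by
  rw [← hψ, ← Submodule.comap_subtype_eq_top, ← LinearEquiv.range (ψ n), ← Submodule.map_top,
    (Submodule.map_injective_of_injective (ψ n).injective).eq_iff]

end AInf

open GradedAlg AInf in
theorem isPKAlg_of_reduced_two_l_algebra_general {F : Type} [Field F] {𝒜 : GradedAlg F}
    (hgen1 : ∀ i, 𝒜.grading i * 𝒜.grading 1 = 𝒜.grading (i + 1))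
    (h0 : 𝒜.grading 0 = Submodule.span F {1}) {T : 𝒜.GMod} (hT : IsTrivialGMod T)
    {R : MinRes T} {S : BigradedAInfty F} (l : ℕ)
    (ψ : ∀ n : ℕ, Edeg S (n : ℤ) ≃ₗ[F] ExtQ T R n)
    (hψ : ∀ (n : ℕ) (j : ℤ), Submodule.map (ψ n).toLinearMap
      ((S.comp (n : ℤ) j).comap (Edeg S (n : ℤ)).subtype) = extComp T R n j)
    (hred : IsReducedTwoL S l) (hgen : ReducedGenByE1 S l) :
    𝒜.IsPKAlg 3 (l + 1) T ∧
      ∀ (R' : MinRes T) (n : ℕ), extComp T R' n (jump (l + 1) 3 n : ℤ) = ⊤ := by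
  have hE : ∀ (n : ℕ) (j : ℤ), Edeg S n ≤ S.comp n j ↔ (R.P n).TopInDeg j := fun n j =>
    (edeg_le_comp_iff_extComp_eq_top ψ hψ n j).trans (extComp_eq_top_iff h0 hT R n j)
  have hE0 := (hE 0 0).2 (R.topInDeg_zero hT.topInDeg)
  have hE1 := (hE 1 1).2 (R.topInDeg_one hgen1 hT.rad_eq_bot hT.topInDeg)
  have hR : ∀ n : ℕ, (R.P n).TopInDeg (jump (l + 1) 3 n : ℤ) := fun n => by
    rw [← hE, natCast_jump_three]
    exact hred.edeg_le_comp hgen hE0 hE1 n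
  refine ⟨⟨R, fun n => ?_⟩, fun R' n => ?_⟩
  · have := R.fg n
    rw [add_zero]
    exact (hR n).genInDeg
  · exact (extComp_eq_top_iff h0 hT R' n _).2 (R.topInDeg_of_topInDeg R' (hR n))

open GradedAlg AInf in
/-- **Theorem 5.6(2).** Let `A = F ⊕ A_1 ⊕ A_2 ⊕ ⋯` be a graded algebra generated in
degree `1`, let `d > 3`, and suppose the `A_∞`-structure on `E(A)` (with `m_1 = 0` and
`m_2` the Yoneda product) has `m_2` and `m_{d−1}` as its only nontrivial
multiplications, and that `(E(A), m_2, m_{d−1})` is a reduced `(2, d−1)`-algebra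
generated by `E^1(A)`.  Then `A` is piecewise-Koszul with period `3` and jump degree
`d`, i.e. `Ext^n_A(F,F) = Ext^n_A(F,F)_{δ^d_3(n)}` for all `n ≥ 0`. -/
theorem isPKAlg_of_reduced_two_l_algebra
    {F : Type} [Field F] (𝒜 : GradedAlg F) (hA : 𝒜.Standing)
    (h0 : 𝒜.grading 0 = Submodule.span F {1})
    (d : ℕ) (hd : 3 < d)
    (T : 𝒜.GMod) (hT : IsTrivialGMod T)
    (R : MinRes T)
    (μ : ∀ i j : ℕ, ExtQ T R i →ₗ[F] ExtQ T R j →ₗ[F] ExtQ T R (i + j))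
    (hμ : IsYonedaMul T R R μ)
    (S : BigradedAInfty F) (hS : AInftyOnExt 𝒜 T R μ S)
    -- the only nontrivial multiplications are `m_2` and `m_{d−1}`:
    (honly : ∀ q : ℕ, q ≠ 2 → q ≠ d - 1 → S.m q = 0)
    -- reduced `(2, d−1)`-algebra, condition (1): `E = F ⊕ E^1 ⊕ E^2 ⊕ ⋯`:
    (hred1 : Module.finrank F ↥(Edeg S 0) = 1)
    -- condition (2): `m_2(E^{3k₁+s₁} ⊗ E^{3k₂+s₂}) = 0` for `s₁,s₂ ∈ {1,2}`, `3 ≤ s₁+s₂ ≤ 4`: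
    (hred2 : ∀ k₁ k₂ s₁ s₂ : ℕ, (s₁ = 1 ∨ s₁ = 2) → (s₂ = 1 ∨ s₂ = 2) →
      3 ≤ s₁ + s₂ → s₁ + s₂ ≤ 4 →
      ∀ x y : S.V, x ∈ Edeg S ((3 * k₁ + s₁ : ℕ) : ℤ) →
        y ∈ Edeg S ((3 * k₂ + s₂ : ℕ) : ℤ) → S.m 2 ![x, y] = 0)
    -- condition (3): `m_{d−1}(E^{i_1} ⊗ ⋯ ⊗ E^{i_{d−1}}) = 0` unless exactly one
    -- `i_j ≡ 2 (mod 3)` and the others are `≡ 1 (mod 3)`: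
    (hred3 : ∀ (ι : Fin (d - 1) → ℤ) (x : Fin (d - 1) → S.V),
      (∀ t, x t ∈ Edeg S (ι t)) →
      (¬ ∃ t₀ : Fin (d - 1), ι t₀ % 3 = 2 ∧ ∀ t, t ≠ t₀ → ι t % 3 = 1) →
      S.m (d - 1) x = 0)
    -- the reduced `(2, d−1)`-algebra `E(A)` is generated by `E^1(A)`:
    (hgen : ReducedGenByE1 S (d - 1)) :
    𝒜.IsPKAlg 3 d T ∧
    ∀ (R' : MinRes T) (n : ℕ), extComp T R' n (jump d 3 n : ℤ) = ⊤ := by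
  obtain ⟨l, rfl⟩ : ∃ l, d = l + 1 := ⟨d - 1, by omega⟩
  exact isPKAlg_of_reduced_two_l_algebra_general (fun i => hA.gen01 i 1) h0 hT l hS.ψ hS.ψ_comp
    ⟨hred2, hred3⟩ hgen
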